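/- arXiv:2002.09876 — 5 statements merged into one kernel-verified Lean document; each statement's English description precedes it below -/
import Mathlib

section
/- Let Ω be a finite set such that |Ω| − 1 is a prime number, and let G act faithfully and 2-transitively on Ω. Fix ω ∈ Ω. Then every nontrivial subnormal subgroup N of the point stabilizer G_ω — that is, every subgroup N ≠ 1 of G_ω for which there is a finite chain N = N₀ ⊴ N₁ ⊴ ⋯ ⊴ N_k = G_ω with each N_i normal in N_{i+1} — acts transitively on Ω \ {ω}. -/
/-!
The stabilizer `S` of `ω` acts faithfully on `Ω \ {ω}`, and transitively by 2-transitivity.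
A transitive group on a set of prime cardinality is primitive, and a nontrivial normal subgroup
of a faithful primitive group is transitive. So transitivity on `Ω \ {ω}` passes from each term
of the subnormal chain to the one below it, every term being nontrivial because it contains `N`;
descending from `S` to `N` gives the theorem.
-/

/-- One step down the chain: a primitive (because transitive of prime degree) faithful group `K`
forces its nontrivial normal subgroup `H` to be transitive. -/
lemma isPretransitive_of_normalized {S X : Type*} [Group S] [MulAction S X] [FaithfulSMul S X]
    (hp : (Nat.card X).Prime) {H K : Subgroup S} (hHK : H ≤ K)
    (hnorm : ∀ g ∈ K, ∀ n ∈ H, g * n * g⁻¹ ∈ H) (hH : H ≠ ⊥)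
    (hK : MulAction.IsPretransitive K X) : MulAction.IsPretransitive H X := by
  have hprim : MulAction.IsPreprimitive K X := MulAction.IsPreprimitive.of_prime_card hp
  have hN : (H.subgroupOf K).Normal :=
    ⟨fun n hn g => hnorm g g.2 n hn⟩
  have hfix : MulAction.fixedPoints (H.subgroupOf K) X ≠ Set.univ := by
    intro h
    refine hH ((Subgroup.eq_bot_iff_forall _).2 fun n hn => ?_)
    refine FaithfulSMul.eq_of_smul_eq_smul (α := X) fun x => ?_
    have hx : x ∈ MulAction.fixedPoints (H.subgroupOf K) X := h ▸ Set.mem_univ x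
    rw [one_smul]
    exact hx ⟨⟨n, hHK hn⟩, hn⟩
  have ht := MulAction.IsQuasiPreprimitive.isPretransitive_of_normal hfix
  refine ⟨fun x y => ?_⟩
  obtain ⟨n, hn⟩ := ht.exists_smul_eq x y
  exact ⟨⟨n.1.1, n.2⟩, hn⟩


/-- Let `Ω` be a finite set with `|Ω| - 1` prime and let `G` act faithfully and
2-transitively on `Ω`.  Then every nontrivial subnormal subgroup `N` of a point stabilizer
`G_ω` acts transitively on `Ω \ {ω}`. -/
theorem subnormal_subgroup_of_stabilizer_transitive
    {G Ω : Type*} [Group G] [Fintype Ω] [MulAction G Ω] [FaithfulSMul G Ω]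
    (hcard : Nat.Prime (Fintype.card Ω - 1))
    (h2t : ∀ a b a' b' : Ω, a ≠ b → a' ≠ b' → ∃ g : G, g • a = a' ∧ g • b = b')
    (ω : Ω) (N : Subgroup G) (hN : N ≠ ⊥)
    (hsubnormal : ∃ (k : ℕ) (c : Fin (k + 1) → Subgroup G),
      c 0 = N ∧ c (Fin.last k) = MulAction.stabilizer G ω ∧
      ∀ i : Fin k, c i.castSucc ≤ c i.succ ∧
        ∀ g ∈ c i.succ, ∀ n ∈ c i.castSucc, g * n * g⁻¹ ∈ c i.castSucc) :
    ∀ a b : Ω, a ≠ ω → b ≠ ω → ∃ n ∈ N, n • a = b := by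
  classical
  obtain ⟨k, c, h0, hlast, hstep⟩ := hsubnormal
  set S := MulAction.stabilizer G ω with hS
  let X := SubMulAction.ofStabilizer G ω
  have hle : ∀ i, N ≤ c i := fun i => by
    induction i using Fin.induction with
    | zero => exact h0.ge
    | succ i ih => exact ih.trans (hstep i).1
  have hleS : ∀ i, c i ≤ S := fun i => by
    induction i using Fin.reverseInduction with
    | last => exact hlast.le
    | cast i ih => exact (hstep i).1.trans ih
  have hprime : (Nat.card X).Prime := by
    have : Nat.card X = Fintype.card Ω - 1 := by
      rw [SubMulAction.nat_card_ofStabilizer_eq, Nat.card_eq_fintype_card]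
    rwa [this]
  have hfaith : FaithfulSMul S X := ⟨fun {g h} hgh => by
    refine Subtype.ext (FaithfulSMul.eq_of_smul_eq_smul (α := Ω) fun x => ?_)
    by_cases hx : x = ω
    · subst hx
      exact g.2.trans h.2.symm
    · exact congrArg Subtype.val (hgh ⟨x, hx⟩)⟩
  have htrans : ∀ i, MulAction.IsPretransitive ((c i).subgroupOf S) X := fun i => by
    induction i using Fin.reverseInduction with
    | last =>
      refine ⟨fun x y => ?_⟩
      obtain ⟨g, hgω, hg⟩ := h2t ω x ω y (Ne.symm x.2) (Ne.symm y.2)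
      exact ⟨⟨⟨g, hgω⟩, hlast.ge hgω⟩, Subtype.ext hg⟩
    | cast i ih =>
      refine isPretransitive_of_normalized hprime (fun x hx => (hstep i).1 hx)
        (fun g hg n hn => (hstep i).2 g hg n hn) (fun hbot => hN ?_) ih
      refine (Subgroup.eq_bot_iff_forall _).2 fun n hn => ?_
      have hn' : (⟨n, hleS _ (hle i.castSucc hn)⟩ : S) ∈ (c i.castSucc).subgroupOf S :=
        hle i.castSucc hn
      rw [hbot, Subgroup.mem_bot] at hn'
      exact congrArg Subtype.val hn'
  intro a b ha hb
  obtain ⟨n, hn⟩ := (htrans 0).exists_smul_eq (⟨a, ha⟩ : X) ⟨b, hb⟩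
  exact ⟨n.1.1, h0.le n.2, congrArg Subtype.val hn⟩
end

section
/- Let G act faithfully on a set Ω and suppose the action is quasiprimitive, meaning that G acts transitively on Ω and every nontrivial normal subgroup of G acts transitively on Ω. If the centre Z(G) is nontrivial, then G is commutative and the action of G on Ω is regular, i.e. transitive with all point stabilizers trivial. -/
/-!
The centre `Z(G)` is a nontrivial normal subgroup, hence transitive on `Ω`. An element fixing one
point `ω` commutes with `Z(G)`, so it fixes every point of the `Z(G)`-orbit of `ω`, i.e. all of
`Ω`, and is trivial by faithfulness. Given `g` and a point `ω`, some central `z` satisfies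
`z • ω = g • ω`; then `z⁻¹ * g` fixes `ω`, so `g = z` is central.
-/

/-- A faithful quasiprimitive action of a group `G` with nontrivial centre
forces `G` to be commutative and the action to be regular. -/
theorem quasiprimitive_with_center_is_regular
    {G Ω : Type*} [Group G] [MulAction G Ω] [FaithfulSMul G Ω]
    (htrans : MulAction.IsPretransitive G Ω)
    (hqp : ∀ N : Subgroup G, N.Normal → N ≠ ⊥ → ∀ a b : Ω, ∃ n ∈ N, n • a = b)
    (hZ : Subgroup.center G ≠ ⊥) :
    (∀ a b : G, a * b = b * a) ∧ (∀ ω : Ω, MulAction.stabilizer G ω = ⊥) := by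
  have hZt := hqp (Subgroup.center G) inferInstance hZ
  have hfix : ∀ (g : G) (ω : Ω), g • ω = ω → g = 1 := by
    intro g ω hg
    refine FaithfulSMul.eq_of_smul_eq_smul (α := Ω) fun b => ?_
    obtain ⟨z, hz, rfl⟩ := hZt ω b
    rw [one_smul, smul_smul, Subgroup.mem_center_iff.mp hz g, mul_smul, hg]
  refine ⟨fun a b => ?_, fun ω => ?_⟩
  · rcases isEmpty_or_nonempty Ω with hΩ | ⟨⟨ω⟩⟩
    · -- A faithful action on the empty set forces `G` to be trivial.
      exact FaithfulSMul.eq_of_smul_eq_smul (α := Ω) fun ω => hΩ.elim ω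
    · obtain ⟨z, hz, h⟩ := hZt ω (b • ω)
      have hb : z⁻¹ * b = 1 := hfix _ ω (by rw [mul_smul, ← h, inv_smul_smul])
      rw [← inv_mul_eq_one.mp hb]
      exact Subgroup.mem_center_iff.mp hz a
  · exact (Subgroup.eq_bot_iff_forall _).mpr fun g hg => hfix g ω (MulAction.mem_stabilizer_iff.mp hg)
end

section
/- Let p be an odd prime such that 2 is a primitive root modulo p, i.e. the unit (2 : ZMod p)ˣ has order p − 1. Consider the 𝔽₂-vector space U of functions from ZMod p to ZMod 2, and the linear maps r, s : U → U defined by (r·w)(i) = w(i − 1) and (s·w)(i) = w(−i), which generate the coordinate-permutation action of the dihedral group D_p of order 2p on U. Then the only subspaces W of U with r(W) = W and s(W) = W are: the zero subspace, the one-dimensional subspace spanned by the all-ones vector, the hyperplane {w ∈ U | Σ_{i ∈ ZMod p} w(i) = 0}, and U itself. -/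
/-!
As a module over `𝔽₂[X]`, with `X` acting as the rotation `r`, the space `U` is generated by the
indicator `e₀` of `0`, and is a copy of `𝔽₂[X] / (X ^ p - 1)`, where `X ^ p - 1 = (X - 1) * Φ` with `Φ` the `p`-th cyclotomic polynomial.
As `2` is a primitive root modulo `p`, the polynomial `Φ` is irreducible over `𝔽₂`.

If `W` contains a non-constant `w`, write `w = f(r) e₀`. Then `Φ ∤ f`, since otherwise
`(r - 1) w = 0` and `w` would be constant. So `a * f + b * Φ = 1` for some `a`, `b`, and multiplying
by `X - 1` gives `(r - 1) e₀ = ((X - 1) a)(r) w ∈ W` (`shift_sub_one_single_mem`). The translates of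
`(r - 1) e₀` span the zero-sum hyperplane, so `W` contains that hyperplane
(`mem_of_sum_eq_zero`) and equals it or `U`. If `W` contains only constant vectors, it is `⊥` or
the span of the all-ones vector.
-/

namespace DihedralInvariant

open Polynomial

/-- The rotation `r` of the coordinates, `(r w) i = w (i - 1)`. -/
abbrev shift (p : ℕ) : Module.End (ZMod 2) (ZMod p → ZMod 2) :=
  LinearMap.funLeft (ZMod 2) (ZMod 2) (fun i : ZMod p => i - 1)

lemma shift_pow_apply (p k : ℕ) (w : ZMod p → ZMod 2) (i : ZMod p) :
    (shift p ^ k) w i = w (i - k) := by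
  induction k generalizing i with
  | zero => simp
  | succ k ih =>
    rw [pow_succ', Module.End.mul_apply, LinearMap.funLeft_apply, ih]
    congr 1
    push_cast
    ring

lemma shift_pow_single (p k : ℕ) [NeZero p] :
    (shift p ^ k) (Pi.single 0 1) = Pi.single (k : ZMod p) 1 := by
  ext i
  rw [shift_pow_apply]
  simp [Pi.single_apply, sub_eq_zero]

lemma shift_pow_self (p : ℕ) : shift p ^ p = 1 := by
  ext1 w
  ext i
  simp [shift_pow_apply]

/-- The indicator of `0` generates `U` as an `𝔽₂[X]`-module. -/
lemma exists_aeval_single (p : ℕ) [NeZero p] (w : ZMod p → ZMod 2) :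
    ∃ f : (ZMod 2)[X], w = aeval (shift p) f (Pi.single 0 1) := by
  refine ⟨∑ i : ZMod p, C (w i) * X ^ i.val, ?_⟩
  rw [map_sum, LinearMap.sum_apply]
  simp only [map_mul, aeval_C, map_pow, aeval_X, Module.End.mul_apply, shift_pow_single,
    Module.algebraMap_end_apply, ZMod.natCast_zmod_val]
  ext j
  simp [Pi.single_apply]

lemma aeval_mem {p : ℕ} {W : Submodule (ZMod 2) (ZMod p → ZMod 2)}
    (hW : ∀ w ∈ W, shift p w ∈ W) (f : (ZMod 2)[X]) {w : ZMod p → ZMod 2} (hw : w ∈ W) :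
    aeval (shift p) f w ∈ W := by
  have hpow (k : ℕ) : (shift p ^ k) w ∈ W := by
    induction k with
    | zero => simpa
    | succ k ih => rw [pow_succ', Module.End.mul_apply]; exact hW _ ih
  rw [aeval_eq_sum_range, LinearMap.sum_apply]
  exact W.sum_mem fun k _ => W.smul_mem _ (hpow k)

lemma irreducible_cyclotomic (p : ℕ) [Fact p.Prime] (hcop : Nat.Coprime 2 p)
    (h2 : orderOf (ZMod.unitOfCoprime 2 hcop) = p - 1) :
    Irreducible (cyclotomic p (ZMod 2)) := by
  refine ZMod.irreducible_of_dvd_cyclotomic_of_natDegree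
    (Nat.prime_two.coprime_iff_not_dvd.mp hcop) dvd_rfl ?_
  rw [natDegree_cyclotomic, Nat.totient_prime Fact.out, h2]

/-- A vector fixed by the rotation is constant. -/
lemma eq_const_of_shift {p : ℕ} [NeZero p] {w : ZMod p → ZMod 2} (h : shift p w = w)
    (i : ZMod p) : w i = w 0 := by
  have hpow (k : ℕ) : (shift p ^ k) w = w := by
    induction k with
    | zero => simp
    | succ k ih => rw [pow_succ', Module.End.mul_apply, ih, h]
  have := congrFun (hpow i.val) i
  rw [shift_pow_apply] at this
  simpa using this.symm

lemma shift_sub_one_single_mem {p : ℕ} [Fact p.Prime]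
    (hirr : Irreducible (cyclotomic p (ZMod 2)))
    {W : Submodule (ZMod 2) (ZMod p → ZMod 2)} (hW : ∀ w ∈ W, shift p w ∈ W)
    {w : ZMod p → ZMod 2} (hw : w ∈ W) (hne : shift p w ≠ w) :
    aeval (shift p) (X - 1 : (ZMod 2)[X]) (Pi.single 0 1) ∈ W := by
  obtain ⟨f, hf⟩ := exists_aeval_single p w
  have hzero : aeval (shift p) (cyclotomic p (ZMod 2) * (X - 1)) = 0 := by
    rw [cyclotomic_prime_mul_X_sub_one]
    simp [shift_pow_self]
  have hndvd : ¬ cyclotomic p (ZMod 2) ∣ f := by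
    rintro ⟨h, rfl⟩
    apply hne
    have : aeval (shift p) (X - 1 : (ZMod 2)[X]) w = 0 := by
      rw [hf, ← Module.End.mul_apply, ← map_mul,
        show (X - 1) * (cyclotomic p (ZMod 2) * h) = h * (cyclotomic p (ZMod 2) * (X - 1)) by ring,
        map_mul, hzero]
      simp
    simpa [sub_eq_zero] using this
  obtain ⟨a, b, hab⟩ := (hirr.coprime_iff_not_dvd.mpr hndvd).symm
  have key : (X - 1 : (ZMod 2)[X]) =
      ((X - 1) * a) * f + b * (cyclotomic p (ZMod 2) * (X - 1)) := by
    linear_combination (-(X - 1 : (ZMod 2)[X])) * hab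
  rw [key, map_add, map_mul _ b, hzero, mul_zero, add_zero, map_mul, Module.End.mul_apply, ← hf]
  exact aeval_mem hW _ hw

/-- If `W` contains `(r - 1) e₀`, it contains every zero-sum vector `u`: each `e_k - e₀` is a
telescoping sum of translates of `(r - 1) e₀`, and `u = ∑ i, u i • (e_i - e₀)`. -/
lemma mem_of_sum_eq_zero {p : ℕ} [NeZero p]
    {W : Submodule (ZMod 2) (ZMod p → ZMod 2)} (hW : ∀ w ∈ W, shift p w ∈ W)
    (hd : aeval (shift p) (X - 1 : (ZMod 2)[X]) (Pi.single 0 1) ∈ W)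
    {u : ZMod p → ZMod 2} (hu : ∑ i, u i = 0) : u ∈ W := by
  have hk (k : ℕ) : (Pi.single (k : ZMod p) 1 - Pi.single 0 1 : ZMod p → ZMod 2) ∈ W := by
    have h := aeval_mem hW (∑ i ∈ Finset.range k, X ^ i) hd
    rw [← Module.End.mul_apply, ← map_mul, geom_sum_mul] at h
    simpa only [map_sub, map_pow, aeval_X, map_one, LinearMap.sub_apply, shift_pow_single,
      Module.End.one_apply] using h
  have hsum : u = ∑ i, u i • (Pi.single i 1 - Pi.single 0 1 : ZMod p → ZMod 2) := by
    simp only [smul_sub, Finset.sum_sub_distrib, ← Finset.sum_smul, hu, zero_smul, sub_zero]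
    ext j
    simp [Pi.single_apply]
  rw [hsum]
  refine W.sum_mem fun i _ => W.smul_mem _ ?_
  simpa using hk i.val

end DihedralInvariant

/-- Let `p` be an odd prime such that `2` is a primitive root modulo `p`.
Consider the `𝔽₂`-vector space `U = (ZMod p → ZMod 2)` together with the linear maps
`r w = fun i => w (i - 1)` and `s w = fun i => w (-i)` generating the coordinate-permutation
action of the dihedral group `D_p`.  Then the only subspaces invariant under `r` and `s` are
`⊥`, the span of the all-ones vector, the zero-sum hyperplane, and `⊤`. -/
theorem dihedral_invariant_subspaces
    (p : ℕ) [Fact p.Prime] (hp : Odd p) (hcop : Nat.Coprime 2 p)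
    (h2 : orderOf (ZMod.unitOfCoprime 2 hcop) = p - 1)
    (W : Submodule (ZMod 2) (ZMod p → ZMod 2))
    (hr : W.map (LinearMap.funLeft (ZMod 2) (ZMod 2) (fun i : ZMod p => i - 1)) = W)
    (hs : W.map (LinearMap.funLeft (ZMod 2) (ZMod 2) (fun i : ZMod p => -i)) = W) :
    W = ⊥ ∨
    W = Submodule.span (ZMod 2) {(fun _ => 1 : ZMod p → ZMod 2)} ∨
    W = LinearMap.ker (∑ i : ZMod p,
          (LinearMap.proj i : (ZMod p → ZMod 2) →ₗ[ZMod 2] ZMod 2)) ∨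
    W = ⊤ := by
  have hW : ∀ w ∈ W, DihedralInvariant.shift p w ∈ W := fun w hw =>
    hr.le (Submodule.mem_map_of_mem hw)
  have hbit (x : ZMod 2) : x = 0 ∨ x = 1 := by
    revert x
    decide
  by_cases hfix : ∀ w ∈ W, DihedralInvariant.shift p w = w
  · have hconst : W ≤ Submodule.span (ZMod 2) {(fun _ => 1 : ZMod p → ZMod 2)} := by
      intro w hw
      refine Submodule.mem_span_singleton.mpr ⟨w 0, ?_⟩
      ext i
      simp [DihedralInvariant.eq_const_of_shift (hfix w hw) i]
    by_cases hbot : W = ⊥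
    · exact Or.inl hbot
    refine Or.inr (Or.inl (le_antisymm hconst ?_))
    obtain ⟨w, hw, hw0⟩ := W.exists_mem_ne_zero_of_ne_bot hbot
    obtain ⟨c, rfl⟩ := Submodule.mem_span_singleton.mp (hconst hw)
    rcases hbit c with rfl | rfl
    · simp at hw0
    · rw [Submodule.span_singleton_le_iff_mem]
      simpa using hw
  · push Not at hfix
    obtain ⟨w, hw, hne⟩ := hfix
    have hd := DihedralInvariant.shift_sub_one_single_mem
      (DihedralInvariant.irreducible_cyclotomic p hcop h2) hW hw hne
    by_cases hsum : ∀ v ∈ W, ∑ i, v i = 0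
    · refine Or.inr (Or.inr (Or.inl (le_antisymm (fun v hv => ?_) (fun v hv => ?_))))
      · simpa using hsum v hv
      · exact DihedralInvariant.mem_of_sum_eq_zero hW hd (by simpa using hv)
    · push Not at hsum
      obtain ⟨v, hv, hv0⟩ := hsum
      refine Or.inr (Or.inr (Or.inr (eq_top_iff.mpr fun u _ => ?_)))
      have hv1 := (hbit (∑ i, v i)).resolve_left hv0
      -- Subtracting a multiple of the vector `v` of coordinate sum `1` makes `u` zero-sum.
      have hmem : u - (∑ i, u i) • v ∈ W := by
        refine DihedralInvariant.mem_of_sum_eq_zero hW hd ?_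
        simp [Finset.sum_sub_distrib, ← Finset.mul_sum, hv1]
      simpa using W.add_mem hmem (W.smul_mem (∑ i, u i) hv)
end

section
/- Let Γ be a connected simple graph and let Γ' be a connected subgraph of Γ with nonempty vertex set V' and edge set E'. Let R be a set of automorphisms of Γ such that for every vertex x' ∈ V' and every edge e of Γ incident to x' there exists r ∈ R with r(e) ∈ E'. Then the translates of Γ' under the subgroup Λ generated by R cover Γ: every vertex of Γ lies in λ(V') for some λ ∈ Λ, and every edge of Γ lies in λ(E') for some λ ∈ Λ. -/
/-!
If a vertex `x = l x'` lies in the translate `l V'` and `e` is an edge at `x`, then `l⁻¹ e` is an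
edge of `Γ` at `x' ∈ V'`, so some `r ∈ R` moves `l⁻¹ e` into `E'`; hence `e` lies in the translate
of `E'` by `l r⁻¹ ∈ Λ`. In particular the other endpoint of `e` is covered too, so the set of
covered vertices is nonempty and closed under adjacency. As `Γ` is connected, every vertex is
covered, and then so is every edge.
-/

/-- Let `Γ` be a connected simple graph and `Γ'` a connected subgraph with
nonempty vertex set.  If `R` is a set of automorphisms of `Γ` such that every edge incident
to a vertex of `Γ'` can be moved into `Γ'` by some element of `R`, then the translates of
`Γ'` under the subgroup generated by `R` cover `Γ`. -/
theorem translates_of_subgraph_cover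
    {V : Type*} (G : SimpleGraph V) (hconn : G.Connected)
    (G' : G.Subgraph) (hne : G'.verts.Nonempty) (hconn' : G'.Connected)
    (R : Set (Equiv.Perm V))
    (hRaut : ∀ r ∈ R, ∀ x y : V, G.Adj (r x) (r y) ↔ G.Adj x y)
    (hR : ∀ x' ∈ G'.verts, ∀ y : V, G.Adj x' y → ∃ r ∈ R, G'.Adj (r x') (r y)) :
    (∀ v : V, ∃ l ∈ Subgroup.closure R, ∃ v' ∈ G'.verts, l v' = v) ∧
    (∀ x y : V, G.Adj x y → ∃ l ∈ Subgroup.closure R,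
      ∃ x' y' : V, G'.Adj x' y' ∧ l x' = x ∧ l y' = y) := by
  have haut : ∀ l ∈ Subgroup.closure R, ∀ x y : V, G.Adj (l x) (l y) ↔ G.Adj x y := by
    intro l hl
    induction hl using Subgroup.closure_induction with
    | mem r hr => exact hRaut r hr
    | one => exact fun _ _ => Iff.rfl
    | mul a b _ _ iha ihb => exact fun x y => (iha (b x) (b y)).trans (ihb x y)
    | inv a _ ih =>
      intro x y
      simpa using (ih (a⁻¹ x) (a⁻¹ y)).symm
  -- Every edge at a covered vertex is covered.
  have step : ∀ x y : V, G.Adj x y →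
      (∃ l ∈ Subgroup.closure R, ∃ v' ∈ G'.verts, l v' = x) →
      ∃ l ∈ Subgroup.closure R, ∃ x' y' : V, G'.Adj x' y' ∧ l x' = x ∧ l y' = y := by
    rintro _ y hxy ⟨l, hl, x', hx', rfl⟩
    have hadj : G.Adj x' (l⁻¹ y) := (haut l hl _ _).mp (by simpa using hxy)
    obtain ⟨r, hr, hr'⟩ := hR x' hx' _ hadj
    exact ⟨l * r⁻¹, mul_mem hl (inv_mem (Subgroup.subset_closure hr)), _, _, hr',
      by simp, by simp⟩
  have hvert : ∀ v : V, ∃ l ∈ Subgroup.closure R, ∃ v' ∈ G'.verts, l v' = v := by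
    obtain ⟨v₀, hv₀⟩ := hne
    intro v
    have hreach := (SimpleGraph.reachable_iff_reflTransGen v₀ v).mp (hconn.preconnected v₀ v)
    induction hreach with
    | refl => exact ⟨1, one_mem _, v₀, hv₀, rfl⟩
    | tail _ hbc ih =>
      obtain ⟨l, hl, x', y', hxy', -, hy⟩ := step _ _ hbc ih
      exact ⟨l, hl, y', hxy'.snd_mem, hy⟩
  exact ⟨hvert, fun x y hxy => step x y hxy (hvert x)⟩
end

section
/- Let Γ be a locally finite connected simple graph and let H be a group of automorphisms of Γ. If the action of H on the vertex set of Γ has finitely many orbits and the action of H on the edge set of Γ has finitely many orbits, then there exists a finitely generated subgroup Λ ≤ H such that the actions of Λ on the vertex set and on the edge set of Γ also have finitely many orbits. -/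
/-!
Let `S` be a finite set of representatives of the vertex orbits of `H`. For every vertex `v` choose
`h v ∈ H` carrying a point of `S` to `v`, and let `L` be generated by the finitely many `h v` with
`v` a neighbour of a point of `S`. The set `L · S` is closed under adjacency: if `w` is a neighbour
of `l s`, then `l⁻¹ w` is a neighbour of `s`, so `w = l (h (l⁻¹ w)) s'` for some `s' ∈ S`. By
connectedness `L · S` is the whole vertex set. Every edge is then an `L`-translate of one of the
finitely many edges that have an end in `S`.
-/

/-- Let `Γ` be a locally finite connected simple graph and `H` a group of
automorphisms of `Γ` with finitely many orbits on vertices and on edges.  Then there is a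
finitely generated subgroup `Λ ≤ H` whose actions on vertices and edges also have finitely
many orbits. -/
theorem exists_finitely_generated_cocompact_subgroup
    {V : Type*} (G : SimpleGraph V) (hlf : ∀ v : V, (G.neighborSet v).Finite)
    (hconn : G.Connected)
    (H : Subgroup (Equiv.Perm V))
    (hHaut : ∀ h ∈ H, ∀ x y : V, G.Adj (h x) (h y) ↔ G.Adj x y)
    (hvorb : ∃ S : Finset V, ∀ v : V, ∃ h ∈ H, ∃ s ∈ S, h s = v)
    (heorb : ∃ T : Finset (V × V), (∀ p ∈ T, G.Adj p.1 p.2) ∧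
      ∀ x y : V, G.Adj x y → ∃ h ∈ H, ∃ p ∈ T,
        (h p.1 = x ∧ h p.2 = y) ∨ (h p.1 = y ∧ h p.2 = x)) :
    ∃ L : Subgroup (Equiv.Perm V), L ≤ H ∧
      (∃ Sgen : Finset (Equiv.Perm V), Subgroup.closure (Sgen : Set (Equiv.Perm V)) = L) ∧
      (∃ S : Finset V, ∀ v : V, ∃ l ∈ L, ∃ s ∈ S, l s = v) ∧
      (∃ T : Finset (V × V), (∀ p ∈ T, G.Adj p.1 p.2) ∧
        ∀ x y : V, G.Adj x y → ∃ l ∈ L, ∃ p ∈ T,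
          (l p.1 = x ∧ l p.2 = y) ∨ (l p.1 = y ∧ l p.2 = x)) := by
  classical
  obtain ⟨S, hS⟩ := hvorb
  choose h hH r hr hhr using hS
  have hN : (⋃ s ∈ S, G.neighborSet s).Finite :=
    S.finite_toSet.biUnion fun s _ => hlf s
  have hE : (⋃ s ∈ S, (fun n => (s, n)) '' G.neighborSet s).Finite :=
    S.finite_toSet.biUnion fun s _ => (hlf s).image _
  set gens : Finset (Equiv.Perm V) := hN.toFinset.image h with hgens
  have hLH : Subgroup.closure (gens : Set (Equiv.Perm V)) ≤ H := by
    rw [Subgroup.closure_le]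
    intro g hg
    simp only [hgens, Finset.coe_image, Set.mem_image] at hg
    obtain ⟨v, -, rfl⟩ := hg
    exact hH v
  have hback : ∀ l ∈ Subgroup.closure (gens : Set (Equiv.Perm V)), ∀ s w : V,
      G.Adj (l s) w → G.Adj s (l⁻¹ w) := by
    intro l hl s w hadj
    rw [← hHaut l (hLH hl)]
    simpa using hadj
  have hV : ∀ v : V, ∃ l ∈ Subgroup.closure (gens : Set (Equiv.Perm V)), ∃ s ∈ S, l s = v := by
    obtain ⟨v₀⟩ := hconn.nonempty
    intro v
    obtain ⟨p⟩ := hconn.preconnected v (r v₀)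
    have hrS := hr v₀
    generalize r v₀ = s₀ at p hrS
    -- induction along a walk from `v` to a point of `S`
    induction p with
    | nil => exact ⟨1, one_mem _, _, hrS, rfl⟩
    | @cons w u _ hadj _ ih =>
      obtain ⟨l, hl, s, hs, rfl⟩ := ih hrS
      have hn := hback l hl s w hadj.symm
      have hmem : h (l⁻¹ w) ∈ Subgroup.closure (gens : Set (Equiv.Perm V)) := by
        refine Subgroup.subset_closure ?_
        rw [hgens]
        refine Finset.mem_coe.2 (Finset.mem_image_of_mem _ (hN.mem_toFinset.2 ?_))
        exact Set.mem_biUnion hs hn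
      refine ⟨l * h (l⁻¹ w), mul_mem hl hmem, r (l⁻¹ w), hr _, ?_⟩
      rw [Equiv.Perm.mul_apply, hhr]
      simp
  refine ⟨_, hLH, ⟨gens, rfl⟩, ⟨S, hV⟩, hE.toFinset, ?_, ?_⟩
  · intro p hp
    simp only [Set.Finite.mem_toFinset, Set.mem_iUnion, Set.mem_image] at hp
    obtain ⟨s, -, n, hn, rfl⟩ := hp
    exact hn
  · intro x y hxy
    obtain ⟨l, hl, s, hs, rfl⟩ := hV x
    refine ⟨l, hl, (s, l⁻¹ y), hE.mem_toFinset.2 ?_, Or.inl ⟨rfl, by simp⟩⟩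
    exact Set.mem_biUnion hs ⟨_, hback l hl s y hxy, rfl⟩
end
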